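/- arXiv:1210.6603 — 2 statements merged into one kernel-verified Lean document; each statement's English description precedes it below -/
import Mathlib

section
/- Let n, m ≥ 1, let A, B be complex n×m matrices, and let (a_1,…,a_m) ∈ {1,…,n}^m be a tuple of indices such that a_p = a_q for some p ≠ q. Then Σ_{σ ∈ S_{2m}} sgn(σ) · ∏_{p=1}^{m} Ψ_{a_p}(σ(2p−1), σ(2p)) = 0, where the sum is over all permutations σ of {1,…,2m}. -/
/-!
Each `Ψ_a` is a decomposable alternating form: `Ψ_a(i, j) = u i * v j - u j * v i` with
`u = (A_a, -B_a)` and `v = (conj B_a, conj A_a)`, so it satisfies the three-term Plücker relation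
`Ψ(1,2) Ψ(3,4) - Ψ(1,3) Ψ(2,4) - Ψ(1,4) Ψ(3,2) = 0`.

If `a p = a q`, write `x₁, x₂` and `y₁, y₂` for the positions carrying the factors `p` and `q`.
Precomposing `σ` with the transpositions `(x₂ y₁)` and `(x₂ y₂)` permutes the summands, so three
times the sum equals the sum of `T σ + T (σ (x₂ y₁)) + T (σ (x₂ y₂))`, where `T σ` is the summand
at `σ`. The factors other than `p` and `q` agree in these three terms, and what remains is the
Plücker relation.
-/


open Matrix BigOperators

/-- The functions `Ψ_a : {1,…,2m}² → ℂ` built from complex `n×m` matrices `A` and `B`. -/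
noncomputable def Psi (n m : ℕ) (A B : Matrix (Fin n) (Fin m) ℂ) (a : Fin n)
    (i j : Fin (2 * m)) : ℂ :=
  if hi : i.val < m then
    if hj : j.val < m then
      -(starRingEnd ℂ) (B a ⟨i.val, hi⟩) * A a ⟨j.val, hj⟩
        + (starRingEnd ℂ) (B a ⟨j.val, hj⟩) * A a ⟨i.val, hi⟩
    else
      A a ⟨i.val, hi⟩ * (starRingEnd ℂ) (A a ⟨j.val - m, by have := j.isLt; omega⟩)
        + B a ⟨j.val - m, by have := j.isLt; omega⟩ * (starRingEnd ℂ) (B a ⟨i.val, hi⟩)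
  else
    if hj : j.val < m then
      -(A a ⟨j.val, hj⟩ * (starRingEnd ℂ) (A a ⟨i.val - m, by have := i.isLt; omega⟩)
        + B a ⟨i.val - m, by have := i.isLt; omega⟩ * (starRingEnd ℂ) (B a ⟨j.val, hj⟩))
    else
      (starRingEnd ℂ) (A a ⟨i.val - m, by have := i.isLt; omega⟩)
          * B a ⟨j.val - m, by have := j.isLt; omega⟩
        - (starRingEnd ℂ) (A a ⟨j.val - m, by have := j.isLt; omega⟩)
          * B a ⟨i.val - m, by have := i.isLt; omega⟩

/-- `Ψ_a` is the exterior product of the vectors `u = (A_a, -B_a)` and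
`v = (conj B_a, conj A_a)`. -/
theorem Psi_decomposable (n m : ℕ) (A B : Matrix (Fin n) (Fin m) ℂ) (a : Fin n) :
    ∃ u v : Fin (2 * m) → ℂ, ∀ i j, Psi n m A B a i j = u i * v j - u j * v i := by
  refine ⟨fun i => if hi : i.val < m then A a ⟨i.val, hi⟩
      else -B a ⟨i.val - m, by have := i.isLt; omega⟩,
    fun i => if hi : i.val < m then (starRingEnd ℂ) (B a ⟨i.val, hi⟩)
      else (starRingEnd ℂ) (A a ⟨i.val - m, by have := i.isLt; omega⟩), fun i j => ?_⟩
  unfold Psi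
  by_cases hi : i.val < m <;> by_cases hj : j.val < m <;> simp only [hi, hj, dite_true, dite_false]
    <;> ring

/-- The three-term Plücker relation, with signs arranged as they arise from the two
transpositions. -/
theorem Psi_plucker (n m : ℕ) (A B : Matrix (Fin n) (Fin m) ℂ) (a : Fin n)
    (i j k l : Fin (2 * m)) :
    Psi n m A B a i j * Psi n m A B a k l - Psi n m A B a i k * Psi n m A B a j l
      - Psi n m A B a i l * Psi n m A B a k j = 0 := by
  obtain ⟨u, v, h⟩ := Psi_decomposable n m A B a
  simp only [h]
  ring

/-- Cancellation lemma: if the index tuple `(a_1,…,a_m)` contains a repeated index, then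
`Σ_{σ ∈ S_{2m}} sgn(σ) · ∏_{p=1}^{m} Ψ_{a_p}(σ(2p−1), σ(2p)) = 0`. -/
theorem psi_repeated_index_cancellation (n m : ℕ) (hn : 1 ≤ n) (hm : 1 ≤ m)
    (A B : Matrix (Fin n) (Fin m) ℂ) (a : Fin m → Fin n)
    (p q : Fin m) (hpq : p ≠ q) (ha : a p = a q) :
    ∑ σ : Equiv.Perm (Fin (2 * m)), ((Equiv.Perm.sign σ : ℤ) : ℂ) *
        ∏ r : Fin m,
          Psi n m A B (a r) (σ ⟨2 * r.val, by have := r.isLt; omega⟩)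
            (σ ⟨2 * r.val + 1, by have := r.isLt; omega⟩) = 0 := by
  set e : Fin m → Fin (2 * m) := fun r => ⟨2 * r.val, by have := r.isLt; omega⟩ with he
  set o : Fin m → Fin (2 * m) := fun r => ⟨2 * r.val + 1, by have := r.isLt; omega⟩ with ho
  set T : Equiv.Perm (Fin (2 * m)) → ℂ := fun σ => ((Equiv.Perm.sign σ : ℤ) : ℂ) *
    ∏ r : Fin m, Psi n m A B (a r) (σ (e r)) (σ (o r)) with hT
  change ∑ σ, T σ = 0
  have hee : ∀ r s, r ≠ s → e r ≠ e s := by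
    intro r s h h'
    simp only [he, Fin.mk.injEq] at h'
    exact h (Fin.ext (by omega))
  have hoo : ∀ r s, r ≠ s → o r ≠ o s := by
    intro r s h h'
    simp only [ho, Fin.mk.injEq] at h'
    exact h (Fin.ext (by omega))
  have heo : ∀ r s, e r ≠ o s := by
    intro r s h'
    simp only [he, ho, Fin.mk.injEq] at h'
    omega
  have split : ∀ f : Fin m → ℂ,
      ∏ r, f r = f p * (f q * ∏ r ∈ (Finset.univ.erase p).erase q, f r) := by
    intro f
    rw [Finset.mul_prod_erase _ f (Finset.mem_erase.2 ⟨hpq.symm, Finset.mem_univ q⟩),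
      Finset.mul_prod_erase _ f (Finset.mem_univ p)]
  -- Both transpositions are odd, and only the factors `p` and `q` see them.
  have key : ∀ σ, T σ + T (σ * Equiv.swap (o p) (e q)) + T (σ * Equiv.swap (o p) (o q)) = 0 := by
    intro σ
    set R := ∏ r ∈ (Finset.univ.erase p).erase q, Psi n m A B (a r) (σ (e r)) (σ (o r)) with hR
    have h0 : T σ = ((Equiv.Perm.sign σ : ℤ) : ℂ) * (Psi n m A B (a q) (σ (e p)) (σ (o p)) *
        (Psi n m A B (a q) (σ (e q)) (σ (o q)) * R)) := by
      simp only [hT]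
      rw [split, ha]
    have h1 : T (σ * Equiv.swap (o p) (e q)) = -((Equiv.Perm.sign σ : ℤ) : ℂ) *
        (Psi n m A B (a q) (σ (e p)) (σ (e q)) *
        (Psi n m A B (a q) (σ (o p)) (σ (o q)) * R)) := by
      have hr : ∏ r ∈ (Finset.univ.erase p).erase q, Psi n m A B (a r)
          ((σ * Equiv.swap (o p) (e q)) (e r)) ((σ * Equiv.swap (o p) (e q)) (o r)) = R := by
        refine Finset.prod_congr rfl fun r hr => ?_
        have hrq := (Finset.mem_erase.1 hr).1
        have hrp := (Finset.mem_erase.1 (Finset.mem_erase.1 hr).2).1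
        rw [Equiv.Perm.mul_apply, Equiv.Perm.mul_apply,
          Equiv.swap_apply_of_ne_of_ne (heo r p) (hee r q hrq),
          Equiv.swap_apply_of_ne_of_ne (hoo r p hrp) (heo q r).symm]
      simp only [hT]
      rw [split, hr, ha]
      simp only [Equiv.Perm.mul_apply, Equiv.swap_apply_left, Equiv.swap_apply_right,
        Equiv.swap_apply_of_ne_of_ne (heo p p) (hee p q hpq),
        Equiv.swap_apply_of_ne_of_ne (hoo q p hpq.symm) (heo q q).symm,
        Equiv.Perm.sign_mul, Equiv.Perm.sign_swap (heo q p).symm]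
      simp
    have h2 : T (σ * Equiv.swap (o p) (o q)) = -((Equiv.Perm.sign σ : ℤ) : ℂ) *
        (Psi n m A B (a q) (σ (e p)) (σ (o q)) *
        (Psi n m A B (a q) (σ (e q)) (σ (o p)) * R)) := by
      have hr : ∏ r ∈ (Finset.univ.erase p).erase q, Psi n m A B (a r)
          ((σ * Equiv.swap (o p) (o q)) (e r)) ((σ * Equiv.swap (o p) (o q)) (o r)) = R := by
        refine Finset.prod_congr rfl fun r hr => ?_
        have hrq := (Finset.mem_erase.1 hr).1
        have hrp := (Finset.mem_erase.1 (Finset.mem_erase.1 hr).2).1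
        rw [Equiv.Perm.mul_apply, Equiv.Perm.mul_apply,
          Equiv.swap_apply_of_ne_of_ne (heo r p) (heo r q),
          Equiv.swap_apply_of_ne_of_ne (hoo r p hrp) (hoo r q hrq)]
      simp only [hT]
      rw [split, hr, ha]
      simp only [Equiv.Perm.mul_apply, Equiv.swap_apply_left, Equiv.swap_apply_right,
        Equiv.swap_apply_of_ne_of_ne (heo p p) (heo p q),
        Equiv.swap_apply_of_ne_of_ne (heo q p) (heo q q),
        Equiv.Perm.sign_mul, Equiv.Perm.sign_swap (hoo p q hpq)]
      simp
    rw [h0, h1, h2]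
    linear_combination ((Equiv.Perm.sign σ : ℤ) : ℂ) * R *
      Psi_plucker n m A B (a q) (σ (e p)) (σ (o p)) (σ (e q)) (σ (o q))
  have reindex : ∀ τ, ∑ σ, T (σ * τ) = ∑ σ, T σ := fun τ =>
    Equiv.sum_comp (Equiv.mulRight τ) T
  have hsum := Finset.sum_congr (rfl : (Finset.univ : Finset (Equiv.Perm (Fin (2 * m)))) = _)
    fun σ _ => key σ
  rw [Finset.sum_add_distrib, Finset.sum_add_distrib, reindex, reindex,
    Finset.sum_const_zero] at hsum
  linear_combination hsum / 3
end

section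
/- Let (Λ, μ) be a σ-finite measure space and let K : Λ × Λ → M₂(ℂ) be a measurable 2×2 complex-matrix-valued kernel satisfying: (i) self-duality: for all x, y ∈ Λ, K(y,x) = K(x,y)^D, where for a 2×2 matrix (a b; c d) we set (a b; c d)^D := (d −b; −c a); (ii) for all x, z ∈ Λ and all matrix indices, the functions y ↦ K(x,y)_{s,t} and y ↦ K(x,y)_{s,t}·K(y,z)_{u,v} are μ-integrable, and the reproducing property ∫_Λ K(x,y)·K(y,z) dμ(y) = K(x,z) holds (matrix product, entrywise Bochner integral); (iii) x ↦ (K(x,x))_{1,1} is μ-integrable with N := ∫_Λ (K(x,x))_{1,1} dμ(x). For m ≥ 1 and points x_1,…,x_m ∈ Λ, let M_m(x_1,…,x_m) be the (2m)×(2m) complex matrix whose (i,j)-th 2×2 block is K(x_i,x_j), let J_{2m} be the (2m)×(2m) block-diagonal matrix with diagonal blocks (0 −1; 1 0), and set D_m(x_1,…,x_m) := Pf(−J_{2m}·M_m(x_1,…,x_m)). Then for every m ≥ 1 and all x_1,…,x_{m−1} ∈ Λ (assuming x_m ↦ D_m(x_1,…,x_m) is μ-integrable), ∫_Λ D_m(x_1,…,x_m)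 dμ(x_m) = (N − m + 1)·D_{m−1}(x_1,…,x_{m−1}), where D_0 := 1. -/
/-!
The matrix `-J M` has blocks `A(x_i, x_j) = ε K(x_i, x_j)` with `ε = (0 1; -1 0)`, and
self-duality of `K` says precisely that it is antisymmetric. Write `p`, `q` for the two indices
belonging to the point `t` which is integrated out.

In the sum over permutations defining the Pfaffian, the monomials are invariant under exchanging
pairs of positions and, by antisymmetry, under exchanging the two positions of a pair. These
symmetries are transitive on the `2(m+1)` positions, so up to the factor `2(m+1)` the value `p`
may be fixed at its own position (`pfSum_eq_card_mul`). The remaining permutations are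
`τ ∘ (q j)`, with `τ` a permutation of the other `2m` indices and `j` the position of `q`
(`pfSum_option`).

* If `j = q`, the monomial is `K(t,t)₀₀` times the monomial of `τ` (`pfTerm_none`), and
  integration produces `N`.
* If `j` is in the pair `k`, the factor `A(a, b)` of `τ` at `k` is replaced by `-A(p, a) A(q, b)`
  or `A(p, b) A(q, a)`, according to which half of the pair `j` is (`pfTerm_some_zero`,
  `pfTerm_some_one`). By the reproducing property the sum of the two integrates to `-A(a, b)`
  (`integral_akern`), so each of the `m` pairs contributes `-1` times the monomial of `τ`.

Hence the unnormalised Pfaffian integrates to `2(m+1)(N - m)` times the smaller one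
(`integral_pfSum`), and `2(m+1)` is the quotient of the normalising constants.
-/

open Matrix MeasureTheory BigOperators

/-- The combinatorial Pfaffian of a `(2m) × (2m)` complex matrix. -/
noncomputable def pfaffian (m : ℕ) (R : Matrix (Fin (2 * m)) (Fin (2 * m)) ℂ) : ℂ :=
  (1 / ((2 : ℂ) ^ m * (Nat.factorial m : ℂ))) *
    ∑ σ : Equiv.Perm (Fin (2 * m)), ((Equiv.Perm.sign σ : ℤ) : ℂ) *
      ∏ i : Fin m,
        R (σ ⟨2 * i.val, by have := i.isLt; omega⟩)
          (σ ⟨2 * i.val + 1, by have := i.isLt; omega⟩)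

/-- The quaternion dual in the `2×2` complex matrix representation:
`(a b; c d)ᴰ = (d −b; −c a)`. -/
def dual2 (M : Matrix (Fin 2) (Fin 2) ℂ) : Matrix (Fin 2) (Fin 2) ℂ :=
  !![M 1 1, -(M 0 1); -(M 1 0), M 0 0]

/-- The `(2m)×(2m)` block-diagonal matrix `J_{2m}` with diagonal `2×2` blocks `(0 −1; 1 0)`. -/
def Jmat (m : ℕ) : Matrix (Fin (2 * m)) (Fin (2 * m)) ℂ :=
  fun p q =>
    if p.val % 2 = 0 ∧ q.val = p.val + 1 then -1
    else if p.val % 2 = 1 ∧ p.val = q.val + 1 then 1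
    else 0

/-- The `(2m)×(2m)` matrix `M_m(x_1,…,x_m)` whose `(i,j)`-th `2×2` block is `K(x_i, x_j)`. -/
def Mblock {Λ : Type*} (K : Λ → Λ → Matrix (Fin 2) (Fin 2) ℂ) (m : ℕ) (x : Fin m → Λ) :
    Matrix (Fin (2 * m)) (Fin (2 * m)) ℂ :=
  fun p q =>
    K (x ⟨p.val / 2, by have := p.isLt; omega⟩) (x ⟨q.val / 2, by have := q.isLt; omega⟩)
      ⟨p.val % 2, by omega⟩ ⟨q.val % 2, by omega⟩

/-- `D_m(x_1,…,x_m) = Pf(−J_{2m}·M_m(x_1,…,x_m))`; note `D_0 = 1`. -/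
noncomputable def Dm {Λ : Type*} (K : Λ → Λ → Matrix (Fin 2) (Fin 2) ℂ) (m : ℕ)
    (x : Fin m → Λ) : ℂ :=
  pfaffian m ((-(Jmat m)) * Mblock K m x)

/-! ### The antisymmetric kernel -/

/-- The antisymmetric `2 × 2` kernel `ε K(x, y)` with `ε = (0 1; -1 0)`. -/
def akern {Λ : Type*} (K : Λ → Λ → Matrix (Fin 2) (Fin 2) ℂ) (x y : Λ) :
    Matrix (Fin 2) (Fin 2) ℂ :=
  !![K x y 1 0, K x y 1 1; -(K x y 0 0), -(K x y 0 1)]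

theorem akern_antisymm {Λ : Type*} {K : Λ → Λ → Matrix (Fin 2) (Fin 2) ℂ}
    (hdual : ∀ x y, K y x = dual2 (K x y)) (x y : Λ) (s t : Fin 2) :
    akern K y x t s = - akern K x y s t := by
  have h := hdual x y
  fin_cases s <;> fin_cases t <;> simp [akern, h, dual2]

/-! ### Symmetries of the Pfaffian sum -/

/-- The signed monomial of `σ` in the Pfaffian of `B`, where the positions are arranged in
consecutive pairs by `e`. -/
noncomputable def pfTerm {ι β : Type*} [Fintype ι] [Fintype β] [DecidableEq β]
    (e : ι × Fin 2 ≃ β) (B : β → β → ℂ) (σ : Equiv.Perm β) : ℂ :=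
  ((Equiv.Perm.sign σ : ℤ) : ℂ) * ∏ i : ι, B (σ (e (i, 0))) (σ (e (i, 1)))

/-- The unnormalised Pfaffian: the sum of all signed monomials. -/
noncomputable def pfSum {ι β : Type*} [Fintype ι] [Fintype β] [DecidableEq β]
    (e : ι × Fin 2 ≃ β) (B : β → β → ℂ) : ℂ :=
  ∑ σ : Equiv.Perm β, pfTerm e B σ

/-- The Pfaffian sum is unchanged by relabelling the pairs along `φ`. -/
theorem pfSum_congr {ι β ι' β' : Type*} [Fintype ι] [Fintype β] [DecidableEq β]
    [Fintype ι'] [Fintype β'] [DecidableEq β']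
    (e : ι × Fin 2 ≃ β) (e' : ι' × Fin 2 ≃ β') (φ : ι ≃ ι')
    (B : β → β → ℂ) (B' : β' → β' → ℂ)
    (h : ∀ i s j t, B (e (i, s)) (e (j, t)) = B' (e' (φ i, s)) (e' (φ j, t))) :
    pfSum e B = pfSum e' B' := by
  let ψ : β ≃ β' := e.symm.trans ((φ.prodCongr (Equiv.refl _)).trans e')
  have hψ : ∀ i s, ψ (e (i, s)) = e' (φ i, s) := fun i s => by simp [ψ]
  have hB : ∀ a b, B a b = B' (ψ a) (ψ b) := by
    intro a b
    obtain ⟨⟨i, s⟩, rfl⟩ := e.surjective a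
    obtain ⟨⟨j, t⟩, rfl⟩ := e.surjective b
    rw [h, hψ, hψ]
  unfold pfSum
  refine Fintype.sum_equiv ψ.permCongr _ _ fun σ => ?_
  unfold pfTerm
  rw [Equiv.Perm.sign_permCongr]
  congr 1
  refine Fintype.prod_equiv φ _ _ fun i => ?_
  rw [hB, ← hψ, ← hψ]
  simp [Equiv.permCongr_apply]

/-- Exchanging the two positions of a pair: the sign and the antisymmetric factor both flip. -/
theorem pfTerm_flip {ι β : Type*} [Fintype ι] [DecidableEq ι] [Fintype β] [DecidableEq β]
    (e : ι × Fin 2 ≃ β) (B : β → β → ℂ) (hB : ∀ a b, B b a = - B a b) (k : ι)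
    (σ : Equiv.Perm β) :
    pfTerm e B (σ * Equiv.swap (e (k, 0)) (e (k, 1))) = pfTerm e B σ := by
  unfold pfTerm
  have hne : e (k, 0) ≠ e (k, 1) := by simp
  rw [Equiv.Perm.sign_mul, Equiv.Perm.sign_swap hne,
    ← Finset.mul_prod_erase _ _ (Finset.mem_univ k),
    ← Finset.mul_prod_erase _ (fun i => B (σ (e (i, 0))) (σ (e (i, 1)))) (Finset.mem_univ k)]
  have : ∀ i ∈ Finset.univ.erase k,
      B ((σ * Equiv.swap (e (k, 0)) (e (k, 1))) (e (i, 0)))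
        ((σ * Equiv.swap (e (k, 0)) (e (k, 1))) (e (i, 1)))
      = B (σ (e (i, 0))) (σ (e (i, 1))) := by
    intro i hi
    have hi : i ≠ k := Finset.ne_of_mem_erase hi
    rw [Equiv.Perm.mul_apply, Equiv.Perm.mul_apply, Equiv.swap_apply_of_ne_of_ne,
      Equiv.swap_apply_of_ne_of_ne] <;> simp [hi]
  rw [Finset.prod_congr rfl this]
  simp only [Equiv.Perm.mul_apply, Equiv.swap_apply_left, Equiv.swap_apply_right]
  rw [hB (σ (e (k, 0)))]
  push_cast
  ring

/-- Exchanging two pairs is an even permutation which permutes the factors. -/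
theorem pfTerm_swap_blocks {ι β : Type*} [Fintype ι] [DecidableEq ι] [Fintype β]
    [DecidableEq β] (e : ι × Fin 2 ≃ β) (B : β → β → ℂ) (k l : ι) (hkl : k ≠ l)
    (σ : Equiv.Perm β) :
    pfTerm e B (σ * (Equiv.swap (e (k, 0)) (e (l, 0)) * Equiv.swap (e (k, 1)) (e (l, 1))))
      = pfTerm e B σ := by
  unfold pfTerm
  have h0 : e (k, 0) ≠ e (l, 0) := by simp [hkl]
  have h1 : e (k, 1) ≠ e (l, 1) := by simp [hkl]
  rw [Equiv.Perm.sign_mul, Equiv.Perm.sign_mul, Equiv.Perm.sign_swap h0,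
    Equiv.Perm.sign_swap h1]
  congr 1
  · simp
  · refine Fintype.prod_equiv (Equiv.swap k l) _ _ fun i => ?_
    have key : ∀ s : Fin 2, (Equiv.swap (e (k, 0)) (e (l, 0)) *
        Equiv.swap (e (k, 1)) (e (l, 1))) (e (i, s)) = e (Equiv.swap k l i, s) := by
      intro s
      simp only [Equiv.Perm.mul_apply, Equiv.swap_apply_def]
      fin_cases s <;> simp <;> split_ifs <;> simp_all
    rw [Equiv.Perm.mul_apply, key, Equiv.Perm.mul_apply, key]

/-- The symmetries of a monomial act transitively on the positions. -/
theorem exists_pfTerm_symm {ι β : Type*} [Fintype ι] [DecidableEq ι] [Fintype β]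
    [DecidableEq β] (e : ι × Fin 2 ≃ β) (B : β → β → ℂ) (hB : ∀ a b, B b a = - B a b)
    (k : ι) (b : β) :
    ∃ h : Equiv.Perm β, h (e (k, 0)) = b ∧ ∀ σ, pfTerm e B (σ * h) = pfTerm e B σ := by
  obtain ⟨⟨l, s⟩, rfl⟩ := e.surjective b
  have step : ∃ h : Equiv.Perm β, h (e (k, 0)) = e (l, 0) ∧
      ∀ σ, pfTerm e B (σ * h) = pfTerm e B σ := by
    by_cases hkl : k = l
    · exact ⟨1, by simp [hkl], by simp⟩
    · refine ⟨_, ?_, pfTerm_swap_blocks e B k l hkl⟩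
      rw [Equiv.Perm.mul_apply,
        Equiv.swap_apply_of_ne_of_ne (a := e (k, 1)) (b := e (l, 1)) (by simp) (by simp),
        Equiv.swap_apply_left]
  obtain ⟨h, h1, h2⟩ := step
  fin_cases s
  · exact ⟨h, h1, h2⟩
  · refine ⟨Equiv.swap (e (l, 0)) (e (l, 1)) * h, ?_, fun σ => ?_⟩
    · simp [h1]
    · rw [← mul_assoc, h2, pfTerm_flip e B hB]

/-- Row expansion: the value `e (k, 0)` may be assumed to sit at its own position. -/
theorem pfSum_eq_card_mul {ι β : Type*} [Fintype ι] [DecidableEq ι] [Fintype β]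
    [DecidableEq β] (e : ι × Fin 2 ≃ β) (B : β → β → ℂ) (hB : ∀ a b, B b a = - B a b)
    (k : ι) :
    pfSum e B = (Fintype.card β : ℂ) *
      ∑ σ : Equiv.Perm β, if σ (e (k, 0)) = e (k, 0) then pfTerm e B σ else 0 := by
  have h1 : pfSum e B = ∑ b : β, ∑ σ : Equiv.Perm β,
      if σ b = e (k, 0) then pfTerm e B σ else 0 := by
    rw [Finset.sum_comm]
    refine Finset.sum_congr rfl fun σ _ => ?_
    simp_rw [← Equiv.eq_symm_apply]
    simp
  have h2 : ∀ b : β, (∑ σ : Equiv.Perm β, if σ b = e (k, 0) then pfTerm e B σ else 0)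
      = ∑ σ : Equiv.Perm β, if σ (e (k, 0)) = e (k, 0) then pfTerm e B σ else 0 := by
    intro b
    obtain ⟨h, hb, hσ⟩ := exists_pfTerm_symm e B hB k b
    refine Fintype.sum_equiv (Equiv.mulRight h) _ _ fun σ => ?_
    simp [hb, hσ]
  rw [h1, Finset.sum_congr rfl fun b _ => h2 b]
  simp

/-! ### Expansion along an added pair -/

/-- Permutations of `Option α`, classified by the position of the value `none`. -/
theorem sum_perm_option {α : Type*} [Fintype α] [DecidableEq α]
    (g : Equiv.Perm (Option α) → ℂ) :
    ∑ σ, g σ = ∑ j : Option α, ∑ τ : Equiv.Perm α,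
      g (Equiv.optionCongr τ * Equiv.swap none j) := by
  rw [← Equiv.sum_comp (Equiv.inv (Equiv.Perm (Option α))) g,
    ← Equiv.sum_comp Equiv.Perm.decomposeOption.symm, Fintype.sum_prod_type]
  refine Finset.sum_congr rfl fun j _ => ?_
  refine Fintype.sum_equiv (Equiv.inv (Equiv.Perm α)) _ _ fun τ => ?_
  congr 1

/-- The pairing of `Option (Option (κ × Fin 2))`: the pairs of `κ` together with the new pair
`(none, some none)`. -/
def optPair (κ : Type*) : Option κ × Fin 2 ≃ Option (Option (κ × Fin 2)) where
  toFun p := match p with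
    | (none, 0) => none
    | (none, 1) => some none
    | (some k, s) => some (some (k, s))
  invFun b := match b with
    | none => (none, 0)
    | some none => (none, 1)
    | some (some a) => (some a.1, a.2)
  left_inv := by
    rintro ⟨_ | k, s⟩
    · fin_cases s <;> rfl
    · rfl
  right_inv := by
    rintro (_ | _ | a) <;> rfl

/-- The antisymmetric matrix of the points `x` bordered by the new point `t`. -/
def bord {Λ κ : Type*} (K : Λ → Λ → Matrix (Fin 2) (Fin 2) ℂ) (x : κ → Λ) (t : Λ)
    (a b : Option (Option (κ × Fin 2))) : ℂ :=
  akern K (((optPair κ).symm a).1.elim t x) (((optPair κ).symm b).1.elim t x)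
    ((optPair κ).symm a).2 ((optPair κ).symm b).2

/-- Expansion along the new pair: the value `none` is fixed at its own position, and `j` is the
position of the value `some none`. -/
theorem pfSum_option {κ : Type*} [Fintype κ] [DecidableEq κ]
    (B : Option (Option (κ × Fin 2)) → Option (Option (κ × Fin 2)) → ℂ)
    (hB : ∀ a b, B b a = - B a b) :
    pfSum (optPair κ) B = (2 * (Fintype.card κ + 1) : ℂ) * ∑ τ : Equiv.Perm (κ × Fin 2),
      ∑ j : Option (κ × Fin 2), pfTerm (optPair κ) B
        (Equiv.optionCongr (Equiv.optionCongr τ * Equiv.swap none j)) := by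
  rw [pfSum_eq_card_mul (optPair κ) B hB none]
  congr 1
  · simp [← Fintype.card_congr (optPair κ)]
    ring
  · rw [sum_perm_option, Finset.sum_eq_single none, sum_perm_option, Finset.sum_comm]
    · have hn : (optPair κ) (none, 0) = none := rfl
      simp only [hn, Equiv.swap_self, ← Equiv.Perm.one_def, mul_one]
      simp
    · intro j _ hj
      refine Finset.sum_eq_zero fun τ _ => if_neg ?_
      obtain ⟨j, rfl⟩ := Option.ne_none_iff_exists'.1 hj
      simp [optPair]
    · simp

/-- The new pair is matched with itself. -/
theorem pfTerm_none {κ : Type*} [Fintype κ] [DecidableEq κ]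
    (B : Option (Option (κ × Fin 2)) → Option (Option (κ × Fin 2)) → ℂ)
    (τ : Equiv.Perm (κ × Fin 2)) :
    pfTerm (optPair κ) B (Equiv.optionCongr (Equiv.optionCongr τ * Equiv.swap none none)) =
      B none (some none) *
        pfTerm (Equiv.refl _) (fun a b => B (some (some a)) (some (some b))) τ := by
  unfold pfTerm
  rw [Fintype.prod_option]
  simp [optPair]
  ring

/-- The value `some none` takes the first position of the pair `k`, and the value displaced from
there joins `none`. -/
theorem pfTerm_some_zero {κ : Type*} [Fintype κ] [DecidableEq κ]
    (B : Option (Option (κ × Fin 2)) → Option (Option (κ × Fin 2)) → ℂ)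
    (τ : Equiv.Perm (κ × Fin 2)) (k : κ) :
    pfTerm (optPair κ) B
      (Equiv.optionCongr (Equiv.optionCongr τ * Equiv.swap none (some (k, 0)))) =
      -(((Equiv.Perm.sign τ : ℤ) : ℂ) * ∏ i ∈ Finset.univ.erase k,
        B (some (some (τ (i, 0)))) (some (some (τ (i, 1))))) *
      (B none (some (some (τ (k, 0)))) * B (some none) (some (some (τ (k, 1))))) := by
  unfold pfTerm
  rw [Fintype.prod_option, ← Finset.mul_prod_erase _ _ (Finset.mem_univ k)]
  have : ∀ i ∈ Finset.univ.erase k, ∀ s : Fin 2,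
      (Equiv.optionCongr (Equiv.optionCongr τ * Equiv.swap none (some (k, 0))))
        (optPair κ (some i, s)) = some (some (τ (i, s))) := by
    intro i hi s
    have hi : i ≠ k := Finset.ne_of_mem_erase hi
    simp [optPair, Equiv.swap_apply_of_ne_of_ne, hi]
  rw [Finset.prod_congr rfl fun i hi => by rw [this i hi 0, this i hi 1]]
  simp [optPair, Equiv.swap_apply_of_ne_of_ne]
  ring

/-- The value `some none` takes the second position of the pair `k`; antisymmetry moves it to the
front, which cancels the sign of the transposition. -/
theorem pfTerm_some_one {κ : Type*} [Fintype κ] [DecidableEq κ]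
    (B : Option (Option (κ × Fin 2)) → Option (Option (κ × Fin 2)) → ℂ)
    (hB : ∀ a b, B b a = - B a b)
    (τ : Equiv.Perm (κ × Fin 2)) (k : κ) :
    pfTerm (optPair κ) B
      (Equiv.optionCongr (Equiv.optionCongr τ * Equiv.swap none (some (k, 1)))) =
      (((Equiv.Perm.sign τ : ℤ) : ℂ) * ∏ i ∈ Finset.univ.erase k,
        B (some (some (τ (i, 0)))) (some (some (τ (i, 1))))) *
      (B none (some (some (τ (k, 1)))) * B (some none) (some (some (τ (k, 0))))) := by
  unfold pfTerm
  rw [Fintype.prod_option, ← Finset.mul_prod_erase _ _ (Finset.mem_univ k)]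
  have : ∀ i ∈ Finset.univ.erase k, ∀ s : Fin 2,
      (Equiv.optionCongr (Equiv.optionCongr τ * Equiv.swap none (some (k, 1))))
        (optPair κ (some i, s)) = some (some (τ (i, s))) := by
    intro i hi s
    have hi : i ≠ k := Finset.ne_of_mem_erase hi
    simp [optPair, Equiv.swap_apply_of_ne_of_ne, hi]
  rw [Finset.prod_congr rfl fun i hi => by rw [this i hi 0, this i hi 1]]
  simp [optPair, Equiv.swap_apply_of_ne_of_ne]
  rw [hB (some none)]
  ring

/-! ### Integration over the added point -/

/-- The reproducing property, rewritten for the antisymmetric kernel. -/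
theorem integral_akern {Λ : Type*} [MeasurableSpace Λ] (μ : Measure Λ)
    (K : Λ → Λ → Matrix (Fin 2) (Fin 2) ℂ)
    (hdual : ∀ x y, K y x = dual2 (K x y))
    (hint2 : ∀ x z s t u v, Integrable (fun y => K x y s t * K y z u v) μ)
    (hrepro : ∀ x z s t, ∫ y, (∑ u : Fin 2, K x y s u * K y z u t) ∂μ = K x z s t)
    (y z : Λ) (a b : Fin 2) :
    Integrable (fun t => akern K t y 0 a * akern K t z 1 b
      - akern K t z 0 b * akern K t y 1 a) μ ∧
    ∫ t, (akern K t y 0 a * akern K t z 1 b - akern K t z 0 b * akern K t y 1 a) ∂μ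
      = akern K y z a b := by
  have hi : ∀ s u, Integrable (fun t => ∑ v : Fin 2, K y t s v * K t z v u) μ := fun s u =>
    integrable_finsetSum _ fun v _ => hint2 y z s v v u
  -- Self-duality turns `K t y` into `K y t`, and the difference becomes, up to sign, an entry of
  -- the product `K y t * K t z`.
  have h : ∃ (c : ℂ) (s : Fin 2), akern K y z a b = c * K y z s b ∧
      ∀ t, akern K t y 0 a * akern K t z 1 b - akern K t z 0 b * akern K t y 1 a
        = c * ∑ v : Fin 2, K y t s v * K t z v b := by
    fin_cases a
    · refine ⟨1, 1, ?_, fun t => ?_⟩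
      · fin_cases b <;> simp [akern]
      · rw [hdual t y]
        fin_cases b <;> simp [akern, dual2] <;> ring
    · refine ⟨-1, 0, ?_, fun t => ?_⟩
      · fin_cases b <;> simp [akern]
      · rw [hdual t y]
        fin_cases b <;> simp [akern, dual2] <;> ring
  obtain ⟨c, s, h1, h2⟩ := h
  simp_rw [h2]
  refine ⟨(hi s b).const_mul c, ?_⟩
  rw [integral_const_mul, hrepro, h1]

/-- The unnormalised form of Dyson's lemma: matching the new pair with itself integrates to the
trace term, and inserting it into each existing pair contributes `-1`. -/
theorem integral_pfSum {Λ κ : Type*} [Fintype κ] [DecidableEq κ]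
    [MeasurableSpace Λ] (μ : Measure Λ)
    (K : Λ → Λ → Matrix (Fin 2) (Fin 2) ℂ)
    (hdual : ∀ x y, K y x = dual2 (K x y))
    (hint2 : ∀ x z s t u v, Integrable (fun y => K x y s t * K y z u v) μ)
    (hrepro : ∀ x z s t, ∫ y, (∑ u : Fin 2, K x y s u * K y z u t) ∂μ = K x z s t)
    (hdiag : Integrable (fun x => K x x 0 0) μ) (x : κ → Λ) :
    ∫ t, pfSum (optPair κ) (bord K x t) ∂μ =
      (2 * (Fintype.card κ + 1) : ℂ) * ((∫ t, K t t 0 0 ∂μ) - Fintype.card κ) *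
        pfSum (Equiv.refl (κ × Fin 2)) (fun a b => akern K (x a.1) (x b.1) a.2 b.2) := by
  set A : κ × Fin 2 → κ × Fin 2 → ℂ := fun a b => akern K (x a.1) (x b.1) a.2 b.2 with hA
  have hanti : ∀ t a b, bord K x t b a = - bord K x t a b := fun t a b =>
    akern_antisymm hdual _ _ _ _
  have hbA : ∀ t a b, bord K x t (some (some a)) (some (some b)) = A a b := fun _ _ _ => rfl
  have hdd : ∀ t, bord K x t none (some none) = K t t 0 0 := by
    intro t
    have : K t t 1 1 = K t t 0 0 := by
      conv_lhs => rw [hdual t t]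
      simp [dual2]
    simpa [bord, optPair, akern] using this
  -- `S k τ` is the monomial of `τ` with the factor of the pair `k` removed.
  let S : κ → Equiv.Perm (κ × Fin 2) → ℂ := fun k τ =>
    ((Equiv.Perm.sign τ : ℤ) : ℂ) * ∏ i ∈ Finset.univ.erase k, A (τ (i, 0)) (τ (i, 1))
  have hS : ∀ k τ, S k τ * A (τ (k, 0)) (τ (k, 1)) = pfTerm (Equiv.refl _) A τ := by
    intro k τ
    unfold pfTerm
    rw [← Finset.mul_prod_erase _ _ (Finset.mem_univ k)]
    simp only [S, Equiv.refl_apply]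
    ring
  let P : κ × Fin 2 → κ × Fin 2 → Λ → ℂ := fun a b t =>
    akern K t (x a.1) 0 a.2 * akern K t (x b.1) 1 b.2
      - akern K t (x b.1) 0 b.2 * akern K t (x a.1) 1 a.2
  have hP : ∀ a b, Integrable (P a b) μ ∧ ∫ t, P a b t ∂μ = A a b := fun a b =>
    integral_akern μ K hdual hint2 hrepro _ _ _ _
  have hexp : ∀ t, pfSum (optPair κ) (bord K x t) = (2 * (Fintype.card κ + 1) : ℂ) *
      ∑ τ : Equiv.Perm (κ × Fin 2), (K t t 0 0 * pfTerm (Equiv.refl _) A τ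
        + ∑ k : κ, -S k τ * P (τ (k, 0)) (τ (k, 1)) t) := by
    intro t
    rw [pfSum_option _ (hanti t)]
    congr 1
    refine Finset.sum_congr rfl fun τ _ => ?_
    rw [Fintype.sum_option, pfTerm_none, hdd, Fintype.sum_prod_type]
    congr 1
    refine Finset.sum_congr rfl fun k _ => ?_
    rw [Fin.sum_univ_two, pfTerm_some_zero, pfTerm_some_one _ (hanti t)]
    simp only [hbA]
    change -S k τ * (akern K t (x (τ (k, 0)).1) 0 (τ (k, 0)).2 *
        akern K t (x (τ (k, 1)).1) 1 (τ (k, 1)).2) +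
      S k τ * (akern K t (x (τ (k, 1)).1) 0 (τ (k, 1)).2 *
        akern K t (x (τ (k, 0)).1) 1 (τ (k, 0)).2) = _
    simp only [P]
    ring
  have hint : ∀ τ : Equiv.Perm (κ × Fin 2), ∀ k,
      Integrable (fun t => -S k τ * P (τ (k, 0)) (τ (k, 1)) t) μ := fun τ k =>
    (hP _ _).1.const_mul _
  have hint' : ∀ τ : Equiv.Perm (κ × Fin 2),
      Integrable (fun t => ∑ k : κ, -S k τ * P (τ (k, 0)) (τ (k, 1)) t) μ := fun τ =>
    integrable_finsetSum _ fun k _ => hint τ k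
  have hsum : ∀ τ : Equiv.Perm (κ × Fin 2),
      Integrable (fun t => K t t 0 0 * pfTerm (Equiv.refl _) A τ
        + ∑ k : κ, -S k τ * P (τ (k, 0)) (τ (k, 1)) t) μ := fun τ =>
    (hdiag.mul_const _).add (hint' τ)
  simp_rw [hexp]
  rw [integral_const_mul, mul_assoc (2 * (Fintype.card κ + 1) : ℂ)]
  congr 1
  rw [integral_finsetSum _ fun τ _ => hsum τ, pfSum,
    Finset.mul_sum]
  refine Finset.sum_congr rfl fun τ _ => ?_
  rw [integral_add (hdiag.mul_const _) (hint' τ), integral_mul_const,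
    integral_finsetSum _ fun k _ => hint τ k]
  simp_rw [integral_const_mul, (hP _ _).2, neg_mul, hS]
  simp
  ring

/-! ### Identification with the concrete Pfaffian -/

/-- The consecutive pairing `(i, s) ↦ 2 i + s` of `Fin (2 * m)`. -/
def finPair (m : ℕ) : Fin m × Fin 2 ≃ Fin (2 * m) :=
  finProdFinEquiv.trans (finCongr (mul_comm m 2))

theorem finPair_val (m : ℕ) (i : Fin m) (s : Fin 2) :
    (finPair m (i, s)).val = s.val + 2 * i.val := by
  simp [finPair]

theorem neg_Jmat_mul_Mblock {Λ : Type*} (K : Λ → Λ → Matrix (Fin 2) (Fin 2) ℂ) (m : ℕ)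
    (x : Fin m → Λ) (i j : Fin m) (s t : Fin 2) :
    ((-(Jmat m)) * Mblock K m x) (finPair m (i, s)) (finPair m (j, t)) =
      akern K (x i) (x j) s t := by
  have hM : ∀ k u, Mblock K m x (finPair m (k, u)) (finPair m (j, t)) = K (x k) (x j) u t := by
    intro k u
    have h1 : ∀ (k : Fin m) (u : Fin 2), (finPair m (k, u)).val / 2 = k.val := fun k u => by
      rw [finPair_val]; omega
    have h2 : ∀ (k : Fin m) (u : Fin 2), (finPair m (k, u)).val % 2 = u.val := fun k u => by
      rw [finPair_val]; omega
    simp only [Mblock, h1, h2]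
  have hJ : ∀ k u, Jmat m (finPair m (i, s)) (finPair m (k, u)) =
      if k = i then (!![0, -1; 1, 0] : Matrix (Fin 2) (Fin 2) ℂ) s u else 0 := by
    intro k u
    simp only [Jmat, finPair_val, Fin.ext_iff]
    by_cases hk : k.val = i.val
    · fin_cases s <;> fin_cases u <;> simp [hk] <;> omega
    · rw [if_neg (by omega), if_neg (by omega), if_neg hk]
  rw [Matrix.mul_apply, ← Equiv.sum_comp (finPair m), Fintype.sum_prod_type,
    Finset.sum_eq_single i]
  · simp only [Fin.sum_univ_two, Matrix.neg_apply, hJ, hM]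
    fin_cases s <;> fin_cases t <;> simp [akern]
  · intro k _ hk
    simp [hJ, hk]
  · simp

theorem Dm_eq {Λ : Type*} (K : Λ → Λ → Matrix (Fin 2) (Fin 2) ℂ) (m : ℕ) (x : Fin m → Λ) :
    Dm K m x = (1 / ((2 : ℂ) ^ m * (Nat.factorial m : ℂ))) *
      pfSum (finPair m) (fun p q => ((-(Jmat m)) * Mblock K m x) p q) := by
  have h0 : ∀ i : Fin m, finPair m (i, 0) = ⟨2 * i.val, by have := i.isLt; omega⟩ :=
    fun i => Fin.ext (by rw [finPair_val]; simp)
  have h1 : ∀ i : Fin m, finPair m (i, 1) = ⟨2 * i.val + 1, by have := i.isLt; omega⟩ :=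
    fun i => Fin.ext (by rw [finPair_val]; simp [add_comm])
  simp only [Dm, pfaffian, pfSum, pfTerm, h0, h1]

/-- Dyson's integration lemma (the quaternion analogue of Mehta's lemma), in the complex
matrix representation: for a measurable self-dual reproducing kernel `K` with
`N = ∫ (K(x,x))_{1,1} dμ(x)`, one has
`∫ D_{m+1}(x_1,…,x_m,t) dμ(t) = (N − (m+1) + 1)·D_m(x_1,…,x_m)`. -/
theorem dyson_integration_lemma {Λ : Type*} [MeasurableSpace Λ]
    (μ : Measure Λ) [SigmaFinite μ]
    (K : Λ → Λ → Matrix (Fin 2) (Fin 2) ℂ)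
    (hKmeas : ∀ s t, Measurable (fun p : Λ × Λ => K p.1 p.2 s t))
    (hdual : ∀ x y, K y x = dual2 (K x y))
    (hint1 : ∀ x s t, Integrable (fun y => K x y s t) μ)
    (hint2 : ∀ x z s t u v, Integrable (fun y => K x y s t * K y z u v) μ)
    (hrepro : ∀ x z s t, ∫ y, (∑ u : Fin 2, K x y s u * K y z u t) ∂μ = K x z s t)
    (hdiag : Integrable (fun x => K x x 0 0) μ)
    (N : ℂ) (hN : N = ∫ x, K x x 0 0 ∂μ)
    (m : ℕ) (x : Fin m → Λ)
    (hD : Integrable (fun t => Dm K (m + 1) (Fin.snoc x t)) μ) :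
    ∫ t, Dm K (m + 1) (Fin.snoc x t) ∂μ = (N - m) * Dm K m x := by
  have hsmall : Dm K m x = (1 / ((2 : ℂ) ^ m * (Nat.factorial m : ℂ))) *
      pfSum (Equiv.refl (Fin m × Fin 2)) (fun a b => akern K (x a.1) (x b.1) a.2 b.2) := by
    rw [Dm_eq, pfSum_congr (finPair m) (Equiv.refl _) (Equiv.refl _)]
    exact fun i s j t => neg_Jmat_mul_Mblock K m x i j s t
  have hbig : ∀ t, Dm K (m + 1) (Fin.snoc x t) =
      (1 / ((2 : ℂ) ^ (m + 1) * (Nat.factorial (m + 1) : ℂ))) *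
        pfSum (optPair (Fin m)) (bord K x t) := by
    intro t
    have hpt : ∀ i : Fin (m + 1), (Fin.snoc x t : Fin (m + 1) → Λ) i =
        (finSuccEquivLast i).elim t x := by
      intro i
      refine Fin.lastCases ?_ (fun i => ?_) i <;> simp
    rw [Dm_eq, pfSum_congr (finPair (m + 1)) (optPair (Fin m)) finSuccEquivLast]
    intro i s j u
    rw [neg_Jmat_mul_Mblock, hpt, hpt]
    simp [bord]
  simp_rw [hbig]
  rw [integral_const_mul, integral_pfSum μ K hdual hint2 hrepro hdiag x, hsmall, ← hN,
    Fintype.card_fin, Nat.factorial_succ]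
  have h1 : (m : ℂ) + 1 ≠ 0 := Nat.cast_add_one_ne_zero m
  have h2 : (Nat.factorial m : ℂ) ≠ 0 := Nat.cast_ne_zero.2 (Nat.factorial_ne_zero m)
  push_cast
  field_simp
  ring
end
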